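/- For every nonnegative integer m, G_{5m+3}(q) ≡ −q^{2m+1} (mod Φ_{5m+3}(q)) in ℤ[q]; equivalently, the cyclotomic polynomial Φ_{5m+3}(q) divides G_{5m+3}(q) + q^{2m+1}. -/

import Mathlib

/-!
The proof evaluates a finite Rogers–Ramanujan identity of Schur at a root of unity.

For a nonzero complex number `q`, write `[n; k]` for the Gaussian binomial at `q`. Schur's identity is
`G_n(q) = ∑_j (-1)^j q^(j(5j-3)/2) [n; ⌊(n-5j)/2⌋ + 1]`, the sum running over all integers `j`.
To see that the right side satisfies the recurrence of `G`, apply both Pascal rules to each summand: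
what remains of the `j`-th summand after removing the `j`-th summands for `n-1` and `n-2` cancels
against the remainder of a neighbouring summand, so the total remainder telescopes to zero
(`schurTerm_succ_succ`, `aeval_qFibG_eq_sum`).

If `q` is a primitive `n`-th root of unity, `[n; k]` vanishes for every `k` other than `0` and `n`,
by `(1 - q^k) [n; k] = (1 - q^n) [n-1; k-1]`. For `n = 5m+3` the only surviving index is `j = m+1`, so
`G_n(q) = (-1)^(m+1) q^((m+1)(5m+2)/2)`, which equals `-q^(2m+1)` because `q^n = 1`, and `q^(n/2) = -1`
if `n` is even. Divisibility follows as `Φ_n` is the minimal polynomial of `q` over `ℤ`.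
-/

open Polynomial

/-- The Schur–Carlitz q-Fibonacci polynomials G: G₀ = 0, G₁ = 1,
    Gₙ = Gₙ₋₁ + q^(n-1) Gₙ₋₂ for n ≥ 2. -/
noncomputable def qFibG : ℕ → Polynomial ℤ
  | 0 => 0
  | 1 => 1
  | (n + 2) => qFibG (n + 1) + X ^ (n + 1) * qFibG n

/-- The Gaussian binomial coefficient `[n; k]` at `q`, for an arbitrary integer `k`
(it is `0` unless `0 ≤ k ≤ n`), defined by the Pascal rule. -/
noncomputable def gaussBinom (q : ℂ) : ℕ → ℤ → ℂ
  | 0, k => if k = 0 then 1 else 0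
  | n + 1, k => gaussBinom q n (k - 1) + q ^ k * gaussBinom q n k

lemma gaussBinom_zero (q : ℂ) (k : ℤ) : gaussBinom q 0 k = if k = 0 then 1 else 0 := rfl

lemma gaussBinom_succ (q : ℂ) (n : ℕ) (k : ℤ) :
    gaussBinom q (n + 1) k = gaussBinom q n (k - 1) + q ^ k * gaussBinom q n k := rfl

/-- The dual Pascal rule. -/
lemma gaussBinom_succ' {q : ℂ} (hq : q ≠ 0) (n : ℕ) (k : ℤ) :
    gaussBinom q (n + 1) k
      = gaussBinom q n k + q ^ ((n : ℤ) + 1 - k) * gaussBinom q n (k - 1) := by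
  induction n generalizing k with
  | zero =>
    rw [gaussBinom_succ]
    simp only [gaussBinom_zero]
    by_cases h0 : k = 0
    · subst h0; simp
    · by_cases h1 : k = 1
      · subst h1; simp
      · have : k - 1 ≠ 0 := by omega
        simp [h0, this]
  | succ n ih =>
    have e1 : q ^ k * q ^ ((n : ℤ) + 1 - k) = q ^ ((n : ℤ) + 1) := by
      rw [← zpow_add₀ hq]; congr 1; ring
    have e2 : q ^ ((n : ℤ) + 1 + 1 - k) * q ^ (k - 1) = q ^ ((n : ℤ) + 1) := by
      rw [← zpow_add₀ hq]; congr 1; ring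
    have b1 := ih (k - 1)
    rw [show (n : ℤ) + 1 - (k - 1) = (n : ℤ) + 1 + 1 - k by ring] at b1
    push_cast
    linear_combination gaussBinom_succ q (n + 1) k + b1 + q ^ k * ih k - gaussBinom_succ q n k
      - q ^ ((n : ℤ) + 1 + 1 - k) * gaussBinom_succ q n (k - 1)
      + gaussBinom q n (k - 1) * (e1 - e2)

lemma gaussBinom_eq_zero (q : ℂ) (n : ℕ) (k : ℤ) (h : k < 0 ∨ (n : ℤ) < k) :
    gaussBinom q n k = 0 := by
  induction n generalizing k with
  | zero => rw [gaussBinom_zero, if_neg (by push_cast at h; omega)]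
  | succ n ih =>
    push_cast at h
    rw [gaussBinom_succ, ih _ (by omega), ih _ (by omega)]
    simp

lemma gaussBinom_zero_right (q : ℂ) (n : ℕ) : gaussBinom q n 0 = 1 := by
  induction n with
  | zero => simp [gaussBinom_zero]
  | succ n ih => rw [gaussBinom_succ, gaussBinom_eq_zero q n _ (by omega), ih]; simp

/-- Absorption identity, from eliminating `[n; k]` between the two Pascal rules. -/
lemma gaussBinom_absorb {q : ℂ} (hq : q ≠ 0) (n : ℕ) (k : ℤ) :
    (1 - q ^ k) * gaussBinom q (n + 1) k = (1 - q ^ (n + 1)) * gaussBinom q n (k - 1) := by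
  have h1 := gaussBinom_succ q n k
  have h2 := gaussBinom_succ' hq n k
  have e1 : q ^ k * q ^ ((n : ℤ) + 1 - k) = q ^ (n + 1) := by
    rw [← zpow_add₀ hq, ← zpow_natCast]; congr 1; push_cast; ring
  linear_combination h1 - q ^ k * h2 - gaussBinom q n (k - 1) * e1

lemma gaussBinom_primitiveRoot {q : ℂ} {n : ℕ} (hn : 0 < n) (h : IsPrimitiveRoot q n) {k : ℤ}
    (h0 : k ≠ 0) (hk : k ≠ n) : gaussBinom q n k = 0 := by
  by_cases hr : k < 0 ∨ (n : ℤ) < k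
  · exact gaussBinom_eq_zero q n k hr
  · obtain ⟨p, rfl⟩ : ∃ p, n = p + 1 := ⟨n - 1, by omega⟩
    have ha := gaussBinom_absorb (h.ne_zero (by omega)) p k
    rw [h.pow_eq_one, sub_self, zero_mul] at ha
    refine (mul_eq_zero.mp ha).resolve_left fun hc => ?_
    have hd := (h.zpow_eq_one_iff_dvd k).mp (sub_eq_zero.mp hc).symm
    have := Int.le_of_dvd (by omega) hd
    omega

/-- The exponent `j(5j-3)/2` in Schur's identity; the division is exact. -/
def schurExp (j : ℤ) : ℤ := j * (5 * j - 3) / 2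

lemma two_mul_schurExp (j : ℤ) : 2 * schurExp j = j * (5 * j - 3) := by
  apply Int.mul_ediv_cancel'
  rcases Int.even_or_odd' j with ⟨c, rfl | rfl⟩
  · exact ⟨c * (5 * (2 * c) - 3), by ring⟩
  · exact ⟨(2 * c + 1) * (5 * c + 1), by ring⟩

lemma schurExp_succ (j : ℤ) : schurExp (j + 1) = schurExp j + 5 * j + 1 := by
  have h1 := two_mul_schurExp j
  have h2 := two_mul_schurExp (j + 1)
  linarith

/-- The `j`-th summand of Schur's identity for `G_n(q)`; `/` is floor division on `ℤ`. -/
noncomputable def schurTerm (q : ℂ) (n : ℕ) (j : ℤ) : ℂ :=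
  (-1) ^ j * q ^ schurExp j * gaussBinom q n (((n : ℤ) - 5 * j) / 2 + 1)

/-- The potential whose differences are the remainders in the recurrence of `schurTerm` from
`n` and `n + 1` to `n + 2`. It is supported on the indices `j` of the same parity as `n`. -/
noncomputable def schurPot (q : ℂ) (n : ℕ) (j : ℤ) : ℂ :=
  if ((n : ℤ) - 5 * j) % 2 = 0 then
    -((-1) ^ j * q ^ (schurExp j + ((n : ℤ) - 5 * j) / 2 + 2)
      * gaussBinom q n (((n : ℤ) - 5 * j) / 2 + 2))
  else 0

lemma schurTerm_succ_succ {q : ℂ} (hq : q ≠ 0) (n : ℕ) (j : ℤ) :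
    schurTerm q (n + 2) j = schurTerm q (n + 1) j + q ^ (n + 1) * schurTerm q n j
      + (schurPot q n (j + 1) - schurPot q n j) := by
  obtain ⟨b, hb | hb⟩ := Int.even_or_odd' ((n : ℤ) - 5 * j)
  · have f0 : ((n : ℤ) - 5 * j) / 2 = b := by omega
    have f1 : (((n + 1 : ℕ) : ℤ) - 5 * j) / 2 = b := by push_cast; omega
    have f2 : (((n + 2 : ℕ) : ℤ) - 5 * j) / 2 = b + 1 := by push_cast; omega
    have p0 : ((n : ℤ) - 5 * j) % 2 = 0 := by omega
    have p1 : ¬ ((n : ℤ) - 5 * (j + 1)) % 2 = 0 := by omega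
    simp only [schurTerm, schurPot, f0, f1, f2, if_pos p0, if_neg p1]
    rw [gaussBinom_succ q (n + 1) (b + 1 + 1), gaussBinom_succ' hq n (b + 1 + 1)]
    have e1 : q ^ (b + 1 + 1) * q ^ ((n : ℤ) + 1 - (b + 1 + 1)) = q ^ (n + 1) := by
      rw [← zpow_add₀ hq, ← zpow_natCast]; congr 1; push_cast; ring
    have e2 : q ^ (schurExp j + b + 2) = q ^ schurExp j * q ^ (b + 1 + 1) := by
      rw [← zpow_add₀ hq]; congr 1; ring
    rw [e2, show b + 1 + 1 - 1 = b + 1 by ring, show b + 2 = b + 1 + 1 by ring]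
    linear_combination (-1) ^ j * q ^ schurExp j * gaussBinom q n (b + 1) * e1
  · have f0 : ((n : ℤ) - 5 * j) / 2 = b := by omega
    have f1 : (((n + 1 : ℕ) : ℤ) - 5 * j) / 2 = b + 1 := by push_cast; omega
    have f2 : (((n + 2 : ℕ) : ℤ) - 5 * j) / 2 = b + 1 := by push_cast; omega
    have f3 : ((n : ℤ) - 5 * (j + 1)) / 2 = b - 2 := by omega
    have p0 : ¬ ((n : ℤ) - 5 * j) % 2 = 0 := by omega
    have p1 : ((n : ℤ) - 5 * (j + 1)) % 2 = 0 := by omega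
    simp only [schurTerm, schurPot, f0, f1, f2, f3, if_neg p0, if_pos p1]
    rw [gaussBinom_succ' hq (n + 1) (b + 1 + 1), show b + 1 + 1 - 1 = b + 1 by ring,
      gaussBinom_succ q n (b + 1), show b + 1 - 1 = b by ring, show b - 2 + 2 = b by ring,
      zpow_add₀ (by norm_num : (-1 : ℂ) ≠ 0) j 1, zpow_one]
    have e1 : q ^ (((n + 1 : ℕ) : ℤ) + 1 - (b + 1 + 1)) * q ^ (b + 1) = q ^ (n + 1) := by
      rw [← zpow_add₀ hq, ← zpow_natCast]; congr 1; push_cast; ring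
    have e2 : q ^ (schurExp (j + 1) + (b - 2) + 2)
        = q ^ schurExp j * q ^ (((n + 1 : ℕ) : ℤ) + 1 - (b + 1 + 1)) := by
      rw [← zpow_add₀ hq, schurExp_succ]; congr 1; push_cast; linarith
    rw [e2]
    linear_combination (-1) ^ j * q ^ schurExp j * gaussBinom q n (b + 1) * e1

/-- Schur's identity. The summands vanish for `|j| ≥ L`, so the sum over all integers is cut off to
`-L ≤ j < L`, with one cut-off `L` for all `n ≤ L`. -/
lemma aeval_qFibG_eq_sum {q : ℂ} (hq : q ≠ 0) {L : ℕ} (hL : 0 < L) (n : ℕ) (hn : n ≤ L) :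
    aeval q (qFibG n) = ∑ i ∈ Finset.range (2 * L), schurTerm q n ((i : ℤ) - L) := by
  induction n using Nat.twoStepInduction with
  | zero =>
    rw [Finset.sum_eq_zero]
    · simp [qFibG]
    · intro i _
      rw [schurTerm, gaussBinom_zero, if_neg (by push_cast; omega), mul_zero]
  | one =>
    rw [Finset.sum_eq_single_of_mem L (Finset.mem_range.mpr (by omega))]
    · simp [qFibG, schurTerm, schurExp, gaussBinom_succ, gaussBinom_zero]
    · intro i _ hi
      rw [schurTerm, gaussBinom_eq_zero q 1 _ (by push_cast; omega), mul_zero]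
  | more n ih0 ih1 =>
    have hpot : ∑ i ∈ Finset.range (2 * L),
        (schurPot q n ((i : ℤ) - L + 1) - schurPot q n ((i : ℤ) - L)) = 0 := by
      have ht := Finset.sum_range_sub (fun i : ℕ => schurPot q n ((i : ℤ) - L)) (2 * L)
      have hs : ∀ i : ℕ, ((i + 1 : ℕ) : ℤ) - L = (i : ℤ) - L + 1 := fun i => by push_cast; ring
      simp only [hs] at ht
      rw [ht]
      have z1 : schurPot q n (((2 * L : ℕ) : ℤ) - L) = 0 := by
        rw [schurPot, gaussBinom_eq_zero q n _ (by push_cast; omega)]; simp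
      have z2 : schurPot q n (((0 : ℕ) : ℤ) - L) = 0 := by
        rw [schurPot, gaussBinom_eq_zero q n _ (by push_cast; omega)]; simp
      rw [z1, z2, sub_zero]
    simp only [schurTerm_succ_succ hq, Finset.sum_add_distrib, ← Finset.mul_sum]
    rw [hpot, ← ih0 (by omega), ← ih1 (by omega)]
    simp [qFibG]

/-- At a primitive `(5m+3)`-th root of unity only the summand `j = m + 1` survives. -/
lemma aeval_qFibG_primitiveRoot {q : ℂ} (m : ℕ) (h : IsPrimitiveRoot q (5 * m + 3)) :
    aeval q (qFibG (5 * m + 3)) = (-1) ^ (m + 1) * q ^ schurExp (m + 1) := by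
  have hq : q ≠ 0 := h.ne_zero (by omega)
  rw [aeval_qFibG_eq_sum hq (L := 5 * m + 3) (by omega) _ le_rfl,
    Finset.sum_eq_single_of_mem (6 * m + 4) (Finset.mem_range.mpr (by omega))]
  · have hj : ((6 * m + 4 : ℕ) : ℤ) - ((5 * m + 3 : ℕ) : ℤ) = (m : ℤ) + 1 := by push_cast; ring
    have hk : (((5 * m + 3 : ℕ) : ℤ) - 5 * ((m : ℤ) + 1)) / 2 + 1 = 0 := by push_cast; omega
    rw [hj, schurTerm, hk, gaussBinom_zero_right, mul_one]
    norm_cast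
  · intro i _ hi
    rw [schurTerm, gaussBinom_primitiveRoot (by omega) h (by push_cast; omega)
      (by push_cast; omega), mul_zero]

lemma neg_one_pow_mul_pow_schurExp {q : ℂ} (m : ℕ) (h : IsPrimitiveRoot q (5 * m + 3)) :
    (-1) ^ (m + 1) * q ^ schurExp (m + 1) = -q ^ (2 * m + 1) := by
  have h2 := two_mul_schurExp ((m : ℤ) + 1)
  have h1 := h.pow_eq_one
  obtain ⟨t, rfl | rfl⟩ := Nat.even_or_odd' m
  · have he : schurExp (((2 * t : ℕ) : ℤ) + 1)
        = (((5 * (2 * t) + 3) * t + (2 * (2 * t) + 1) : ℕ) : ℤ) := by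
      push_cast at h2 ⊢; linarith
    rw [he, zpow_natCast, pow_add q, pow_mul q, h1, pow_succ (-1 : ℂ), pow_mul (-1 : ℂ)]
    simp
  ·
    -- `5 * t + 4` is half the order of `q`
    have hhalf : q ^ (5 * t + 4) = -1 := by
      have hs : q ^ (5 * t + 4) * q ^ (5 * t + 4) = 1 := by
        rw [← pow_add, ← h1]; congr 1; ring
      exact (mul_self_eq_one_iff.mp hs).resolve_left
        (h.pow_ne_one_of_pos_of_lt (by omega) (by omega))
    have he : schurExp (((2 * t + 1 : ℕ) : ℤ) + 1)
        = (((5 * (2 * t + 1) + 3) * t + (5 * t + 4) + (2 * (2 * t + 1) + 1) : ℕ) : ℤ) := by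
      push_cast at h2 ⊢; linarith
    rw [he, zpow_natCast, pow_add q, pow_add q, pow_mul q, h1, hhalf,
      show 2 * t + 1 + 1 = 2 * (t + 1) by ring, pow_mul (-1 : ℂ)]
    simp

theorem qFibG_mod_cyclotomic_7 (m : ℕ) :
    Polynomial.cyclotomic (5 * m + 3) ℤ ∣ (qFibG (5 * m + 3) + X ^ (2 * m + 1)) := by
  have h := Complex.isPrimitiveRoot_exp (5 * m + 3) (by omega)
  rw [cyclotomic_eq_minpoly h (by omega)]
  apply minpoly.isIntegrallyClosed_dvd (h.isIntegral (by omega))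
  rw [map_add, aeval_qFibG_primitiveRoot m h, neg_one_pow_mul_pow_schurExp m h]
  simp
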